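/- arXiv:1802.01383 — 2 statements merged into one kernel-verified Lean document; each statement's English description precedes it below -/
import Mathlib

section
/- The quotient VB_3'/VB_3'' (the abelianization of the commutator subgroup VB_3' of VB_3) is isomorphic to (ℤ/3ℤ) ⊕ (ℤ/3ℤ) ⊕ (ℤ/3ℤ) ⊕ A, where A is a free abelian group of countably infinite rank (the direct sum of copies of ℤ indexed by ℤ). -/
/-!
Common setup: the virtual braid group `VB n` and the welded braid group `WB n`
as presented groups, together with the distinguished elements of their
commutator subgroups used in the paper
"Commutator subgroups of virtual and welded braid groups".

Generators: for `i : Fin (n-1)`, `Sum.inl i` represents σ_{i+1} and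
`Sum.inr i` represents ρ_{i+1}.
-/

/-- The generating set of `VB n` (and `WB n`). -/
abbrev VBGen (n : ℕ) := (Fin (n - 1)) ⊕ (Fin (n - 1))

/-- The free group letter σ_i, for `1 ≤ i ≤ n-1` (junk value `1` otherwise). -/
def fσ (n i : ℕ) : FreeGroup (VBGen n) :=
  if h : 1 ≤ i ∧ i - 1 < n - 1 then FreeGroup.of (Sum.inl ⟨i - 1, h.2⟩) else 1

/-- The free group letter ρ_i, for `1 ≤ i ≤ n-1` (junk value `1` otherwise). -/
def fρ (n i : ℕ) : FreeGroup (VBGen n) :=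
  if h : 1 ≤ i ∧ i - 1 < n - 1 then FreeGroup.of (Sum.inr ⟨i - 1, h.2⟩) else 1

/-- The defining relators of the virtual braid group `VB n`. -/
def vbRels (n : ℕ) : Set (FreeGroup (VBGen n)) :=
  {r | ∃ i j, 1 ≤ i ∧ i + 2 ≤ j ∧ j ≤ n - 1 ∧
      (r = fσ n i * fσ n j * (fσ n i)⁻¹ * (fσ n j)⁻¹ ∨
       r = fρ n i * fρ n j * (fρ n i)⁻¹ * (fρ n j)⁻¹ ∨
       r = fσ n i * fρ n j * (fσ n i)⁻¹ * (fρ n j)⁻¹ ∨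
       r = fσ n j * fρ n i * (fσ n j)⁻¹ * (fρ n i)⁻¹)} ∪
  {r | ∃ i, 1 ≤ i ∧ i + 1 ≤ n - 1 ∧
      (r = fσ n i * fσ n (i+1) * fσ n i * (fσ n (i+1))⁻¹ * (fσ n i)⁻¹ * (fσ n (i+1))⁻¹ ∨
       r = fρ n i * fρ n (i+1) * fρ n i * (fρ n (i+1))⁻¹ * (fρ n i)⁻¹ * (fρ n (i+1))⁻¹ ∨
       r = fρ n i * fρ n (i+1) * fσ n i * (fρ n (i+1))⁻¹ * (fρ n i)⁻¹ * (fσ n (i+1))⁻¹)} ∪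
  {r | ∃ i, 1 ≤ i ∧ i ≤ n - 1 ∧ r = fρ n i * fρ n i}

/-- The virtual braid group on `n` strands. -/
abbrev VB (n : ℕ) := PresentedGroup (vbRels n)

/-- The generator σ_i of `VB n`. -/
def vσ (n i : ℕ) : VB n := PresentedGroup.mk (vbRels n) (fσ n i)

/-- The generator ρ_i of `VB n`. -/
def vρ (n i : ℕ) : VB n := PresentedGroup.mk (vbRels n) (fρ n i)

/-- a_m = σ_1^m (ρ_1 σ_1 ρ_1 σ_1⁻¹) σ_1^{-m}. -/
def va (n : ℕ) (m : ℤ) : VB n :=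
  (vσ n 1) ^ m * (vρ n 1 * vσ n 1 * vρ n 1 * (vσ n 1)⁻¹) * (vσ n 1) ^ (-m)

/-- b_{m,ε} = σ_1^m (ρ_1^ε σ_2 ρ_1^ε σ_1⁻¹) σ_1^{-m}. -/
def vb (n : ℕ) (m : ℤ) (ε : ℕ) : VB n :=
  (vσ n 1) ^ m * ((vρ n 1) ^ ε * vσ n 2 * (vρ n 1) ^ ε * (vσ n 1)⁻¹) * (vσ n 1) ^ (-m)

/-- c_l = σ_l σ_1⁻¹. -/
def vc (n l : ℕ) : VB n := vσ n l * (vσ n 1)⁻¹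

/-- f_{m,ε} = σ_1^m (ρ_1^ε ρ_2 ρ_1^{ε+1}) σ_1^{-m}; `f_m` is `vf n m 0`. -/
def vf (n : ℕ) (m : ℤ) (ε : ℕ) : VB n :=
  (vσ n 1) ^ m * ((vρ n 1) ^ ε * vρ n 2 * (vρ n 1) ^ (ε + 1)) * (vσ n 1) ^ (-m)

/-- g_{m,l} = σ_1^m (ρ_l ρ_1) σ_1^{-m}. -/
def vg (n : ℕ) (m : ℤ) (l : ℕ) : VB n :=
  (vσ n 1) ^ m * (vρ n l * vρ n 1) * (vσ n 1) ^ (-m)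

/-- The additional relators ρ_i σ_{i+1} σ_i (ρ_{i+1})⁻¹ σ_i⁻¹ σ_{i+1}⁻¹ of the
welded braid group. -/
def wbExtraRels (n : ℕ) : Set (FreeGroup (VBGen n)) :=
  {r | ∃ i, 1 ≤ i ∧ i + 1 ≤ n - 1 ∧
      r = fρ n i * fσ n (i+1) * fσ n i * (fρ n (i+1))⁻¹ * (fσ n i)⁻¹ * (fσ n (i+1))⁻¹}

/-- The defining relators of the welded braid group `WB n`. -/
def wbRels (n : ℕ) : Set (FreeGroup (VBGen n)) := vbRels n ∪ wbExtraRels n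

/-- The welded braid group on `n` strands. -/
abbrev WB (n : ℕ) := PresentedGroup (wbRels n)

/-- The generator σ_i of `WB n`. -/
def wσ (n i : ℕ) : WB n := PresentedGroup.mk (wbRels n) (fσ n i)

/-- The generator ρ_i of `WB n`. -/
def wρ (n i : ℕ) : WB n := PresentedGroup.mk (wbRels n) (fρ n i)

/-- a_m in `WB n`. -/
def wa (n : ℕ) (m : ℤ) : WB n :=
  (wσ n 1) ^ m * (wρ n 1 * wσ n 1 * wρ n 1 * (wσ n 1)⁻¹) * (wσ n 1) ^ (-m)

/-- f_{m,ε} in `WB n`; `f_m` is `wf n m 0`. -/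
def wf (n : ℕ) (m : ℤ) (ε : ℕ) : WB n :=
  (wσ n 1) ^ m * ((wρ n 1) ^ ε * wρ n 2 * (wρ n 1) ^ (ε + 1)) * (wσ n 1) ^ (-m)

/-- c_l in `WB n`. -/
def wc (n l : ℕ) : WB n := wσ n l * (wσ n 1)⁻¹

/-- g_{m,l} in `WB n`. -/
def wg (n : ℕ) (m : ℤ) (l : ℕ) : WB n :=
  (wσ n 1) ^ m * (wρ n l * wρ n 1) * (wσ n 1) ^ (-m)

/-! ### The affine group of a commutative ring -/

/-- Affine maps `v ↦ u v + m` over a commutative ring. -/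
@[ext] structure AffR (R : Type) [CommRing R] where
  u : Rˣ
  m : R

namespace AffR

variable {R : Type} [CommRing R]

instance : Mul (AffR R) := ⟨fun a b => ⟨a.u * b.u, a.m + a.u * b.m⟩⟩
instance : One (AffR R) := ⟨⟨1, 0⟩⟩
instance : Inv (AffR R) := ⟨fun a => ⟨a.u⁻¹, -((a.u⁻¹ : Rˣ) * a.m)⟩⟩

@[simp] theorem mul_u (a b : AffR R) : (a * b).u = a.u * b.u := rfl
@[simp] theorem mul_m (a b : AffR R) : (a * b).m = a.m + a.u * b.m := rfl
@[simp] theorem one_u : (1 : AffR R).u = 1 := rfl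
@[simp] theorem one_m : (1 : AffR R).m = 0 := rfl
@[simp] theorem inv_u (a : AffR R) : (a⁻¹).u = a.u⁻¹ := rfl
@[simp] theorem inv_m (a : AffR R) : (a⁻¹).m = -((a.u⁻¹ : Rˣ) * a.m) := rfl

instance : Group (AffR R) := Group.ofLeftAxioms
  (by intro a b c; ext <;> simp [mul_assoc, mul_add, add_assoc])
  (by intro a; ext <;> simp)
  (by intro a; ext <;> simp)

/-- The linear part. -/
def lin : AffR R →* Rˣ where
  toFun := AffR.u
  map_one' := rfl
  map_mul' _ _ := rfl

end AffR

/-! ### Relations of `VB 3` -/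

theorem vb3_lift {H : Type} [Group H] (f : VBGen 3 → H)
    (h1 : f (.inl 0) * f (.inl 1) * f (.inl 0) = f (.inl 1) * f (.inl 0) * f (.inl 1))
    (h2 : f (.inr 0) * f (.inr 1) * f (.inr 0) = f (.inr 1) * f (.inr 0) * f (.inr 1))
    (h3 : f (.inr 0) * f (.inr 1) * f (.inl 0) = f (.inl 1) * f (.inr 0) * f (.inr 1))
    (h4 : f (.inr 0) * f (.inr 0) = 1) (h5 : f (.inr 1) * f (.inr 1) = 1) :
    ∀ r ∈ vbRels 3, FreeGroup.lift f r = 1 := by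
  rintro r ((⟨i, j, hi, hij, hj, -⟩ | ⟨i, hi, hi2, h⟩) | ⟨i, hi, hi2, h⟩)
  · omega
  · obtain rfl : i = 1 := by omega
    have e1 : fσ 3 1 = FreeGroup.of (.inl 0) := rfl
    have e2 : fσ 3 (1+1) = FreeGroup.of (.inl 1) := rfl
    have e3 : fρ 3 1 = FreeGroup.of (.inr 0) := rfl
    have e4 : fρ 3 (1+1) = FreeGroup.of (.inr 1) := rfl
    rcases h with rfl | rfl | rfl
    · simp only [e1, e2, map_mul, map_inv, FreeGroup.lift_apply_of]
      rw [h1]; group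
    · simp only [e3, e4, map_mul, map_inv, FreeGroup.lift_apply_of]
      rw [h2]; group
    · simp only [e1, e2, e3, e4, map_mul, map_inv, FreeGroup.lift_apply_of]
      rw [h3]; group
  · subst h
    have : i = 1 ∨ i = 2 := by omega
    rcases this with rfl | rfl
    · have e3 : fρ 3 1 = FreeGroup.of (.inr 0) := rfl
      simp only [e3, map_mul, FreeGroup.lift_apply_of]; exact h4
    · have e3 : fρ 3 2 = FreeGroup.of (.inr 1) := rfl
      simp only [e3, map_mul, FreeGroup.lift_apply_of]; exact h5

namespace VB3

abbrev s1 : VB 3 := vσ 3 1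
abbrev s2 : VB 3 := vσ 3 2
abbrev r1 : VB 3 := vρ 3 1
abbrev r2 : VB 3 := vρ 3 2

theorem rel_of {x : FreeGroup (VBGen 3)} (h : x ∈ vbRels 3) :
    PresentedGroup.mk (vbRels 3) x = 1 :=
  PresentedGroup.one_of_mem h

theorem braid : s1 * s2 * s1 = s2 * s1 * s2 := by
  have h := rel_of (x := fσ 3 1 * fσ 3 (1+1) * fσ 3 1 * (fσ 3 (1+1))⁻¹ * (fσ 3 1)⁻¹ * (fσ 3 (1+1))⁻¹)
    (Or.inl (Or.inr ⟨1, le_refl _, by norm_num, Or.inl rfl⟩))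
  simp only [map_mul, map_inv] at h
  change s1 * s2 * s1 * s2⁻¹ * s1⁻¹ * s2⁻¹ = 1 at h
  rw [mul_inv_eq_one, mul_inv_eq_iff_eq_mul, mul_inv_eq_iff_eq_mul] at h
  exact h

theorem rbraid : r1 * r2 * r1 = r2 * r1 * r2 := by
  have h := rel_of (x := fρ 3 1 * fρ 3 (1+1) * fρ 3 1 * (fρ 3 (1+1))⁻¹ * (fρ 3 1)⁻¹ * (fρ 3 (1+1))⁻¹)
    (Or.inl (Or.inr ⟨1, le_refl _, by norm_num, Or.inr (Or.inl rfl)⟩))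
  simp only [map_mul, map_inv] at h
  change r1 * r2 * r1 * r2⁻¹ * r1⁻¹ * r2⁻¹ = 1 at h
  rw [mul_inv_eq_one, mul_inv_eq_iff_eq_mul, mul_inv_eq_iff_eq_mul] at h
  exact h

theorem mixed : r1 * r2 * s1 = s2 * r1 * r2 := by
  have h := rel_of (x := fρ 3 1 * fρ 3 (1+1) * fσ 3 1 * (fρ 3 (1+1))⁻¹ * (fρ 3 1)⁻¹ * (fσ 3 (1+1))⁻¹)
    (Or.inl (Or.inr ⟨1, le_refl _, by norm_num, Or.inr (Or.inr rfl)⟩))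
  simp only [map_mul, map_inv] at h
  change r1 * r2 * s1 * r2⁻¹ * r1⁻¹ * s2⁻¹ = 1 at h
  rw [mul_inv_eq_one, mul_inv_eq_iff_eq_mul, mul_inv_eq_iff_eq_mul] at h
  exact h

theorem r1_sq : r1 * r1 = 1 := by
  have h := rel_of (x := fρ 3 1 * fρ 3 1) (Or.inr ⟨1, le_refl _, by norm_num, rfl⟩)
  rw [map_mul] at h; exact h

theorem r2_sq : r2 * r2 = 1 := by
  have h := rel_of (x := fρ 3 2 * fρ 3 2) (Or.inr ⟨2, by norm_num, by norm_num, rfl⟩)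
  rw [map_mul] at h; exact h

/-- The element of order three. -/
abbrev t : VB 3 := r1 * r2

theorem r1_inv : r1⁻¹ = r1 := inv_eq_of_mul_eq_one_left r1_sq
theorem r2_inv : r2⁻¹ = r2 := inv_eq_of_mul_eq_one_left r2_sq

theorem t_cube : t * t * t = 1 := by
  have : t * t * t = (r1 * r2 * r1) * (r2 * r1 * r2) := by simp only [t]; group
  rw [this, ← rbraid]
  calc r1 * r2 * r1 * (r1 * r2 * r1) = r1 * r2 * (r1 * r1) * r2 * r1 := by group
    _ = r1 * (r2 * r2) * r1 := by rw [r1_sq]; group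
    _ = 1 := by rw [r2_sq, mul_one, r1_sq]

theorem s2_eq : s2 = t * s1 * t⁻¹ := by
  rw [eq_mul_inv_iff_mul_eq]; simp only [t]; rw [← mul_assoc]; exact mixed.symm

theorem r2_eq : r2 = r1 * t := by
  simp only [t]; rw [← mul_assoc, r1_sq, one_mul]

theorem closure_gen : Subgroup.closure {s1, r1, t} = (⊤ : Subgroup (VB 3)) := by
  rw [eq_top_iff, ← PresentedGroup.closure_range_of, Subgroup.closure_le]
  have hs : s1 ∈ Subgroup.closure {s1, r1, t} := Subgroup.subset_closure (by simp)
  have hr : r1 ∈ Subgroup.closure {s1, r1, t} := Subgroup.subset_closure (by simp)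
  have ht : t ∈ Subgroup.closure {s1, r1, t} := Subgroup.subset_closure (by simp)
  rintro _ ⟨i | i, rfl⟩ <;> fin_cases i
  · exact hs
  · change s2 ∈ Subgroup.closure {s1, r1, t}
    rw [s2_eq]; exact mul_mem (mul_mem ht hs) (inv_mem ht)
  · exact hr
  · change r2 ∈ Subgroup.closure {s1, r1, t}
    rw [r2_eq]; exact mul_mem hr ht

/-- The commutator subgroup. -/
abbrev K : Subgroup (VB 3) := commutator (VB 3)
/-- Its abelianization. -/
abbrev A := Abelianization ↥(commutator (VB 3))

/-- A homomorphism from `VB 3` to an affine group. -/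
def aff {R : Type} [CommRing R] (x : Rˣ) (μ τ : R) (h3 : 3 * τ = 0)
    (hb : (1 - x) * (1 - x + x ^ 2) * τ = 0) : VB 3 →* AffR R :=
  PresentedGroup.toGroup (f := Sum.elim
    (fun i => if i = 0 then ⟨x, μ⟩ else ⟨x, τ + μ - x * τ⟩)
    (fun i => if i = 0 then ⟨-1, 0⟩ else ⟨-1, -τ⟩))
    (vb3_lift _
      (by ext
          · simp
          · simp; linear_combination (-1 : R) * hb)
      (by ext
          · simp
          · simp; linear_combination h3)
      (by ext
          · simp
          · simp)
      (by ext <;> simp)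
      (by ext <;> simp))

section
variable {R : Type} [CommRing R] (x : Rˣ) (μ τ : R) (h3 : 3 * τ = 0)
    (hb : (1 - x) * (1 - x + x ^ 2) * τ = 0)

theorem aff_s1 : aff x μ τ h3 hb s1 = ⟨x, μ⟩ := PresentedGroup.toGroup.of _
theorem aff_r1 : aff x μ τ h3 hb r1 = ⟨-1, 0⟩ := PresentedGroup.toGroup.of _
theorem aff_r2 : aff x μ τ h3 hb r2 = ⟨-1, -τ⟩ := PresentedGroup.toGroup.of _
theorem aff_t : aff x μ τ h3 hb t = ⟨1, τ⟩ := by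
  rw [map_mul, aff_r1, aff_r2]; ext <;> simp

theorem aff_lin {k : VB 3} (hk : k ∈ K) : (aff x μ τ h3 hb k).u = 1 := by
  have : K ≤ (AffR.lin.comp (aff x μ τ h3 hb)).ker := Abelianization.commutator_subset_ker _
  exact this hk

/-- The translation part on the abelianized commutator subgroup. -/
def dK : ↥K →* Multiplicative R where
  toFun k := Multiplicative.ofAdd (aff x μ τ h3 hb k).m
  map_one' := by simp
  map_mul' a b := by
    simp [aff_lin x μ τ h3 hb a.2]

def d : A →* Multiplicative R := Abelianization.lift (dK x μ τ h3 hb)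

end

/-- Conjugation action on `A`. -/
def c (g : VB 3) : A →* A := Abelianization.map (MulAut.conjNormal (H := K) g).toMonoidHom

/-- class of an element of the commutator subgroup. -/
def cl (k : VB 3) (hk : k ∈ K) : A := Abelianization.of ⟨k, hk⟩

theorem conj_mem {k : VB 3} (hk : k ∈ K) (g : VB 3) : g * k * g⁻¹ ∈ K :=
  Subgroup.Normal.conj_mem inferInstance k hk g

theorem c_cl (g k : VB 3) (hk : k ∈ K) : c g (cl k hk) = cl (g * k * g⁻¹) (conj_mem hk g) := by
  simp only [c, cl, Abelianization.map_of]
  congr 1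

theorem cl_mul (k l : VB 3) (hk : k ∈ K) (hl : l ∈ K) :
    cl (k * l) (mul_mem hk hl) = cl k hk * cl l hl :=
  map_mul (Abelianization.of (G := ↥K)) ⟨k, hk⟩ ⟨l, hl⟩

theorem cl_inv (k : VB 3) (hk : k ∈ K) : cl k⁻¹ (inv_mem hk) = (cl k hk)⁻¹ :=
  map_inv (Abelianization.of (G := ↥K)) ⟨k, hk⟩

theorem cl_congr {k l : VB 3} (hk : k ∈ K) (h : k = l) : cl k hk = cl l (h ▸ hk) := by
  subst h; rfl

theorem cl_ind (z : A) : ∃ k, ∃ hk : k ∈ K, z = cl k hk := by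
  obtain ⟨k, rfl⟩ := QuotientGroup.mk_surjective z
  exact ⟨k.1, k.2, rfl⟩

theorem c_mul (g h : VB 3) (z : A) : c (g * h) z = c g (c h z) := by
  obtain ⟨k, hk, rfl⟩ := cl_ind z
  simp only [c_cl]
  exact cl_congr _ (by group)

theorem c_K (g : VB 3) (hg : g ∈ K) (z : A) : c g z = z := by
  obtain ⟨k, hk, rfl⟩ := cl_ind z
  rw [c_cl _ _ hk, show cl (g * k * g⁻¹) (conj_mem hk g) = cl g hg * cl k hk * cl g⁻¹ (inv_mem hg) by
    rw [← cl_mul _ _ hg hk, ← cl_mul _ _ (mul_mem hg hk) (inv_mem hg)], cl_inv _ hg, mul_comm, inv_mul_cancel_left]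

theorem comm_mem (g h : VB 3) : g * h * g⁻¹ * h⁻¹ ∈ K :=
  Subgroup.commutator_mem_commutator (Subgroup.mem_top g) (Subgroup.mem_top h)

theorem c_comm (g h : VB 3) (z : A) : c g (c h z) = c h (c g z) := by
  rw [← c_mul, ← c_mul]
  have : g * h = (g * h * g⁻¹ * h⁻¹) * (h * g) := by group
  rw [this, c_mul, c_K _ (comm_mem g h)]

theorem c_one (z : A) : c 1 z = z := c_K 1 (one_mem _) z

theorem t_mem : t ∈ K := by
  have : t = r2 * r1 * r2⁻¹ * r1⁻¹ := by
    rw [r1_inv, r2_inv, ← rbraid]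
    calc r1 * r2 = r1 * r2 * 1 := by group
      _ = r1 * r2 * r1 * r1 := by rw [← r1_sq]; group
  rw [this]; exact comm_mem _ _

theorem a_mem : r1 * s1 * r1⁻¹ * s1⁻¹ ∈ K := comm_mem _ _

/-- `f m` is the class of `s1^m t s1^-m`. -/
def f (m : ℤ) : A := c (s1 ^ m) (cl t t_mem)
/-- `a m` is the class of `s1^m [r1,s1] s1^-m`. -/
def a (m : ℤ) : A := c (s1 ^ m) (cl _ a_mem)

theorem c_f (n m : ℤ) : c (s1 ^ n) (f m) = f (n + m) := by
  rw [f, ← c_mul, ← zpow_add]; rfl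
theorem c_a (n m : ℤ) : c (s1 ^ n) (a m) = a (n + m) := by
  rw [a, ← c_mul, ← zpow_add]; rfl
theorem c_f1 (m : ℤ) : c s1 (f m) = f (1 + m) := by
  rw [← c_f, zpow_one]
theorem c_a1 (m : ℤ) : c s1 (a m) = a (1 + m) := by
  rw [← c_a, zpow_one]

theorem cr_f (m : ℤ) : c r1 (f m) = (f m)⁻¹ := by
  rw [f, c_comm, ← map_inv, ← cl_inv, c_cl]
  congr 1
  apply cl_congr
  rw [mul_inv_rev, r1_inv, r2_inv, ← mul_assoc, r1_sq, one_mul]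

theorem cr_a (m : ℤ) : c r1 (a m) = (a m)⁻¹ := by
  rw [a, c_comm, ← map_inv, ← cl_inv, c_cl]
  congr 1
  apply cl_congr
  simp only [mul_inv_rev, inv_inv, r1_inv, mul_assoc]
  rw [← mul_assoc r1 r1, r1_sq, one_mul]

theorem f_cube (m : ℤ) : f m ^ 3 = 1 := by
  rw [f, ← map_pow, pow_succ, pow_two, ← cl_mul, ← cl_mul _ _ (mul_mem t_mem t_mem) t_mem,
    cl_congr _ t_cube, show cl 1 _ = 1 from map_one Abelianization.of, map_one]

theorem f_rel0 : f 0 * (f 1)⁻¹ * f 2 * (f 3)⁻¹ = f 1 * (f 2)⁻¹ := by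
  have hf (m : ℤ) : f m = cl (s1 ^ m * t * (s1 ^ m)⁻¹) (conj_mem t_mem _) := by
    rw [f, c_cl]
  have key : (s1 ^ (0:ℤ) * t * (s1 ^ (0:ℤ))⁻¹) * (s1 ^ (1:ℤ) * t * (s1 ^ (1:ℤ))⁻¹)⁻¹ *
      (s1 ^ (2:ℤ) * t * (s1 ^ (2:ℤ))⁻¹) * (s1 ^ (3:ℤ) * t * (s1 ^ (3:ℤ))⁻¹)⁻¹ =
      (s1 ^ (1:ℤ) * t * (s1 ^ (1:ℤ))⁻¹) * (s1 ^ (2:ℤ) * t * (s1 ^ (2:ℤ))⁻¹)⁻¹ := by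
    have h := braid
    rw [s2_eq] at h
    generalize t = u at h ⊢
    generalize s1 = s at h ⊢
    have h2 : s * (u * s * u⁻¹) * s * (s ^ (3:ℤ))⁻¹ =
      u * s * u⁻¹ * s * (u * s * u⁻¹) * (s ^ (3:ℤ))⁻¹ := by rw [h]
    refine Eq.trans ?_ (h2.symm.trans ?_) <;> group
  rw [hf 0, hf 1, hf 2, hf 3]
  simp only [← cl_inv, ← cl_mul]
  exact cl_congr _ key

theorem f_rel (m : ℤ) : f m * (f (m + 1))⁻¹ * f (m + 2) * (f (m + 3))⁻¹ =
    f (m + 1) * (f (m + 2))⁻¹ := by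
  have := congrArg (c (s1 ^ m)) f_rel0
  simpa only [map_mul, map_inv, c_f, add_zero] using this

/-- The parametrisation map, additive version. -/
def zf (m : ℤ) : ZMod 3 →+ Additive A :=
  ZMod.lift 3 ⟨zmultiplesHom _ (Additive.ofMul (f m)), by
    simp only [zmultiplesHom_apply]
    rw [← ofMul_zpow]
    exact congrArg Additive.ofMul (f_cube m)⟩

theorem zf_one (m : ℤ) : zf m 1 = Additive.ofMul (f m) := by
  have := ZMod.lift_coe 3 (⟨zmultiplesHom _ (Additive.ofMul (f m)), by
    simp only [zmultiplesHom_apply]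
    rw [← ofMul_zpow]
    exact congrArg Additive.ofMul (f_cube m)⟩ :
      { f : ℤ →+ Additive A // f 3 = 0 }) 1
  simpa [zf] using this

noncomputable def za : (ℤ →₀ ℤ) →+ Additive A :=
  Finsupp.liftAddHom (fun m => zmultiplesHom _ (Additive.ofMul (a m)))

theorem za_single (m n : ℤ) : za (Finsupp.single m n) = n • Additive.ofMul (a m) := by
  simp [za]

noncomputable def Θ : (ZMod 3 × ZMod 3 × ZMod 3 × (ℤ →₀ ℤ)) →+ Additive A :=
  (zf 0).coprod ((zf 1).coprod ((zf 2).coprod za))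

theorem Θ_apply (p q r : ZMod 3) (h : ℤ →₀ ℤ) :
    Θ (p, q, r, h) = zf 0 p + (zf 1 q + (zf 2 r + za h)) := rfl

/-- Range of `Θ` as a subgroup of `A`. -/
noncomputable def T : Subgroup A := (AddMonoidHom.toMultiplicativeLeft Θ).range

theorem T_le (S : Subgroup A) (h0 : f 0 ∈ S) (h1 : f 1 ∈ S) (h2 : f 2 ∈ S)
    (ha : ∀ m, a m ∈ S) : T ≤ S := by
  have hz (m : ℤ) (hm : f m ∈ S) (p : ZMod 3) : (zf m p).toMul ∈ S := by
    have : p = p.val • (1 : ZMod 3) := by simp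
    rw [this, map_nsmul, zf_one]
    exact pow_mem hm _
  have hza (h : ℤ →₀ ℤ) : (za h).toMul ∈ S := by
    induction h using Finsupp.induction_linear with
    | zero => rw [map_zero]; exact one_mem _
    | add x y hx hy => rw [map_add]; exact mul_mem hx hy
    | single m n => rw [za_single]; exact zpow_mem (ha m) _
  rintro _ ⟨v, rfl⟩
  obtain ⟨p, q, r, h⟩ := v
  exact mul_mem (hz 0 h0 p) (mul_mem (hz 1 h1 q) (mul_mem (hz 2 h2 r) (hza h)))

theorem Θ_mem (v) : (Θ v).toMul ∈ T := ⟨Multiplicative.ofAdd v, rfl⟩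

theorem a_mem_T (m : ℤ) : a m ∈ T := by
  have := Θ_mem (0, 0, 0, Finsupp.single m 1)
  simpa [Θ_apply, za_single] using this

theorem f_mem_T' : f 0 ∈ T ∧ f 1 ∈ T ∧ f 2 ∈ T := by
  refine ⟨?_, ?_, ?_⟩
  · simpa [Θ_apply, zf_one] using Θ_mem (1, 0, 0, 0)
  · simpa [Θ_apply, zf_one] using Θ_mem (0, 1, 0, 0)
  · simpa [Θ_apply, zf_one] using Θ_mem (0, 0, 1, 0)

theorem f_mem_aux (m : ℤ) : f m ∈ T ∧ f (m + 1) ∈ T ∧ f (m + 2) ∈ T := by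
  induction m using Int.induction_on with
  | zero => simpa using f_mem_T'
  | succ i ih =>
    obtain ⟨h0, h1, h2⟩ := ih
    have h := f_rel i
    rw [add_assoc, add_assoc]
    refine ⟨h1, h2, ?_⟩
    have e : f ((i : ℤ) + 3) = (f (i + 1) * (f (i + 2))⁻¹)⁻¹ * (f i * (f (i + 1))⁻¹ * f (i + 2)) := by
      rw [← h]; group
    norm_num
    rw [e]
    exact mul_mem (inv_mem (mul_mem h1 (inv_mem h2))) (mul_mem (mul_mem h0 (inv_mem h1)) h2)
  | pred i ih =>
    obtain ⟨h0, h1, h2⟩ := ih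
    generalize -(i : ℤ) = j at *
    have h := f_rel (j - 1)
    rw [show j - 1 + 1 = j by ring, show j - 1 + 2 = j + 1 by ring,
      show j - 1 + 3 = j + 2 by ring] at h
    rw [show j - 1 + 1 = j by ring, show j - 1 + 2 = j + 1 by ring]
    refine ⟨?_, h0, h1⟩
    rw [mul_inv_eq_iff_eq_mul, ← eq_mul_inv_iff_mul_eq, mul_inv_eq_iff_eq_mul] at h
    rw [h]
    exact mul_mem (mul_mem (mul_mem (mul_mem h0 (inv_mem h1)) h2) (inv_mem h1)) h0

theorem f_mem_T (m : ℤ) : f m ∈ T := (f_mem_aux m).1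

theorem T_stable (g : VB 3) (hf : ∀ m, c g (f m) ∈ T) (ha : ∀ m, c g (a m) ∈ T) :
    ∀ z ∈ T, c g z ∈ T :=
  T_le (T.comap (c g)) (hf 0) (hf 1) (hf 2) ha

theorem T_inv (g : VB 3) : (∀ z ∈ T, c g z ∈ T) ∧ (∀ z ∈ T, c g⁻¹ z ∈ T) := by
  have hg : g ∈ Subgroup.closure {s1, r1, t} := by rw [closure_gen]; trivial
  induction hg using Subgroup.closure_induction with
  | mem x hx =>
    have hr : ∀ z ∈ T, c r1 z ∈ T := T_stable _
      (fun m => by rw [cr_f]; exact inv_mem (f_mem_T m))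
      (fun m => by rw [cr_a]; exact inv_mem (a_mem_T m))
    rcases hx with rfl | rfl | rfl
    · refine ⟨T_stable _ (fun m => ?_) (fun m => ?_), T_stable _ (fun m => ?_) (fun m => ?_)⟩
      · rw [c_f1]; exact f_mem_T _
      · rw [c_a1]; exact a_mem_T _
      · rw [← zpow_neg_one, c_f]; exact f_mem_T _
      · rw [← zpow_neg_one, c_a]; exact a_mem_T _
    · rw [r1_inv]; exact ⟨hr, hr⟩
    · exact ⟨fun z hz => by rwa [c_K _ t_mem], fun z hz => by rwa [c_K _ (inv_mem t_mem)]⟩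
  | one => exact ⟨fun z hz => by rwa [c_one], fun z hz => by rwa [inv_one, c_one]⟩
  | mul x y _ _ hx hy =>
    refine ⟨fun z hz => ?_, fun z hz => ?_⟩
    · rw [c_mul]; exact hx.1 _ (hy.1 _ hz)
    · rw [mul_inv_rev, c_mul]; exact hy.2 _ (hx.2 _ hz)
  | inv x _ hx => rw [inv_inv]; exact hx.symm

/-- The preimage of `T` in `VB 3`. -/
noncomputable def L : Subgroup (VB 3) :=
  (T.comap (Abelianization.of (G := ↥K))).map K.subtype

theorem mem_L {k : VB 3} : k ∈ L ↔ ∃ hk : k ∈ K, cl k hk ∈ T := by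
  constructor
  · rintro ⟨k, hk, rfl⟩
    exact ⟨k.2, hk⟩
  · rintro ⟨hk, h⟩
    exact ⟨⟨k, hk⟩, h, rfl⟩

instance L_normal : L.Normal := by
  constructor
  intro k hk g
  rw [mem_L] at hk ⊢
  obtain ⟨hk, h⟩ := hk
  refine ⟨conj_mem hk g, ?_⟩
  rw [← c_cl _ _ hk]
  exact (T_inv g).1 _ h

theorem t_mem_L : t ∈ L := mem_L.2 ⟨t_mem, by
  have := f_mem_T 0
  rwa [f, zpow_zero, c_one] at this⟩

theorem a_mem_L : r1 * s1 * r1⁻¹ * s1⁻¹ ∈ L := mem_L.2 ⟨a_mem, by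
  have := a_mem_T 0
  rwa [a, zpow_zero, c_one] at this⟩

theorem commute_closure {G H : Type*} [Group G] [Group H] (q : G →* H) (S : Set G)
    (hS : Subgroup.closure S = ⊤) (y : H) (h : ∀ x ∈ S, Commute (q x) y) (g : G) :
    Commute (q g) y := by
  have hg : g ∈ Subgroup.closure S := by rw [hS]; trivial
  induction hg using Subgroup.closure_induction with
  | mem x hx => exact h x hx
  | one => rw [map_one]; exact Commute.one_left _
  | mul x z _ _ hx hz => rw [map_mul]; exact hx.mul_left hz
  | inv x _ hx => rw [map_inv]; exact hx.inv_left

theorem K_le_L : K ≤ L := by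
  let q := QuotientGroup.mk' L
  have ht : q t = 1 := (QuotientGroup.eq_one_iff _).2 t_mem_L
  have ha : Commute (q r1) (q s1) := by
    have : q (r1 * s1 * r1⁻¹ * s1⁻¹) = 1 := (QuotientGroup.eq_one_iff _).2 a_mem_L
    rw [map_mul, map_mul, map_mul, map_inv, map_inv, mul_inv_eq_one,
      mul_inv_eq_iff_eq_mul] at this
    exact this
  have h1 : ∀ x ∈ ({s1, r1, t} : Set (VB 3)), ∀ y ∈ ({s1, r1, t} : Set (VB 3)),
      Commute (q x) (q y) := by
    rintro x (rfl | rfl | rfl) y (rfl | rfl | rfl)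
    · exact Commute.refl _
    · exact ha.symm
    · rw [ht]; exact Commute.one_right _
    · exact ha
    · exact Commute.refl _
    · rw [ht]; exact Commute.one_right _
    · rw [ht]; exact Commute.one_left _
    · rw [ht]; exact Commute.one_left _
    · exact Commute.refl _
  have h2 : ∀ g h, Commute (q g) (q h) := fun g h =>
    commute_closure q _ closure_gen _ (fun x hx =>
      (commute_closure q _ closure_gen _ (fun y hy => h1 y hy x hx) h).symm) g
  refine Subgroup.commutator_le.2 fun g _ h _ => ?_
  have : q (g * h * g⁻¹ * h⁻¹) = 1 := by
    rw [map_mul, map_mul, map_mul, map_inv, map_inv, mul_inv_eq_one,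
      mul_inv_eq_iff_eq_mul]
    exact h2 g h
  exact (QuotientGroup.eq_one_iff _).1 this

theorem Θ_surj : Function.Surjective Θ := by
  intro z
  obtain ⟨k, hk, h⟩ := cl_ind z.toMul
  obtain ⟨hk', ⟨v, hv⟩⟩ := mem_L.1 (K_le_L hk)
  exact ⟨v.toAdd, congrArg Additive.ofMul (hv.trans h.symm)⟩

section
variable {R : Type} [CommRing R] (x : Rˣ) (μ τ : R) (h3 : 3 * τ = 0)
    (hb : (1 - x) * (1 - x + x ^ 2) * τ = 0)

theorem d_cl (k : VB 3) (hk : k ∈ K) :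
    (d x μ τ h3 hb (cl k hk)).toAdd = (aff x μ τ h3 hb k).m := rfl

theorem d_c (g : VB 3) (z : A) : (d x μ τ h3 hb (c g z)).toAdd =
    (aff x μ τ h3 hb g).u * (d x μ τ h3 hb z).toAdd := by
  obtain ⟨k, hk, rfl⟩ := cl_ind z
  rw [c_cl, d_cl, d_cl]
  simp [aff_lin x μ τ h3 hb hk]

theorem lin_zpow (m : ℤ) : (aff x μ τ h3 hb (s1 ^ m)).u = x ^ m := by
  have := map_zpow (AffR.lin.comp (aff x μ τ h3 hb)) s1 m
  refine this.trans ?_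
  rw [MonoidHom.comp_apply, aff_s1]; rfl

theorem d_f (m : ℤ) : (d x μ τ h3 hb (f m)).toAdd = (x ^ m : Rˣ) * τ := by
  rw [f, d_c, lin_zpow, d_cl, aff_t]

theorem d_a (m : ℤ) : (d x μ τ h3 hb (a m)).toAdd = (x ^ m : Rˣ) * (-2 * μ) := by
  rw [a, d_c, lin_zpow, d_cl]
  simp only [map_mul, map_inv, aff_s1, aff_r1]
  congr 1
  simp
  ring

end

open LaurentPolynomial in
/-- `T` as a unit. -/
noncomputable def uT : (LaurentPolynomial ℤ)ˣ :=
  ⟨LaurentPolynomial.T 1, LaurentPolynomial.T (-1), by rw [← T_add]; rfl, by rw [← T_add]; rfl⟩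

open LaurentPolynomial in
theorem uT_zpow (m : ℤ) : ((uT ^ m : (LaurentPolynomial ℤ)ˣ) : LaurentPolynomial ℤ) =
    LaurentPolynomial.T m := by
  induction m using Int.induction_on with
  | zero => simp
  | succ i ih => rw [zpow_add_one, Units.val_mul, ih, T_add]; rfl
  | pred i ih => rw [zpow_sub_one, Units.val_mul, ih, T_sub]; rfl

/-- first detecting map -/
noncomputable def d1 : Additive A →+ LaurentPolynomial ℤ :=
  MonoidHom.toAdditiveLeft (d uT 1 0 (by simp) (by simp))

theorem d1_f (m : ℤ) : d1 (Additive.ofMul (f m)) = 0 :=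
  (d_f uT 1 0 (by simp) (by simp) m).trans (by simp)

theorem d1_a (m : ℤ) : d1 (Additive.ofMul (a m)) = LaurentPolynomial.T m * (-2) :=
  (d_a uT 1 0 (by simp) (by simp) m).trans (by rw [uT_zpow]; simp)

theorem d1_zf (m : ℤ) (p : ZMod 3) : d1 (zf m p) = 0 := by
  have : p = p.val • (1 : ZMod 3) := by simp
  rw [this, map_nsmul, zf_one, map_nsmul, d1_f, smul_zero]

theorem d1_za (h : ℤ →₀ ℤ) : d1 (za h) = AddMonoidAlgebra.ofCoeff ((-2 : ℤ) • h) := by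
  induction h using Finsupp.induction_linear with
  | zero => simp
  | add x y hx hy => rw [map_add, map_add, hx, hy, smul_add]; rfl
  | single m n =>
    rw [za_single, map_zsmul, d1_a]
    have e : AddMonoidAlgebra.ofCoeff ((-2 : ℤ) • Finsupp.single m n) =
        (AddMonoidAlgebra.single m (-2 * n) : LaurentPolynomial ℤ) := by
      rw [Finsupp.smul_single]; rfl
    rw [e, LaurentPolynomial.single_eq_C_mul_T, eq_intCast, zsmul_eq_mul]
    push_cast
    ring

/-- finite ring -/
abbrev R2 := ZMod 3 × DualNumber (ZMod 3)

/-- the unit `(1, -1 + ε)`. -/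
def u2 : R2ˣ :=
  ⟨(1, -1 + DualNumber.eps), (1, -1 - DualNumber.eps),
    by ext <;> simp, by ext <;> simp⟩

theorem h32 : (3 : R2) * 1 = 0 := by
  ext <;> simp <;> rfl

theorem hb2 : (1 - (u2 : R2)) * (1 - u2 + u2 ^ 2) * 1 = 0 := by
  ext <;> simp [u2, pow_two] <;> decide

/-- second detecting map -/
noncomputable def d2 : Additive A →+ R2 :=
  MonoidHom.toAdditiveLeft (d u2 0 1 h32 hb2)

theorem d2_f (m : ℤ) : d2 (Additive.ofMul (f m)) = ((u2 ^ m : R2ˣ) : R2) :=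
  (d_f u2 0 1 h32 hb2 m).trans (by simp)

theorem d2_zf (m : ℤ) (p : ZMod 3) : d2 (zf m p) = p.val • ((u2 ^ m : R2ˣ) : R2) := by
  have : p = p.val • (1 : ZMod 3) := by simp
  conv_lhs => rw [this, map_nsmul, zf_one, map_nsmul, d2_f]

theorem Θ_inj : Function.Injective Θ := by
  rw [injective_iff_map_eq_zero]
  rintro ⟨p, q, r, h⟩ hv
  rw [Θ_apply] at hv
  have hh : h = 0 := by
    have := congrArg d1 hv
    simp only [map_add, d1_zf, d1_za, zero_add, map_zero] at this
    have := congrArg AddMonoidAlgebra.coeff this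
    ext k
    have := DFunLike.congr_fun this k
    simpa using this
  subst hh
  have := congrArg d2 hv
  simp only [map_add, d2_zf, map_zero, add_zero] at this
  have e1 := congrArg (fun z : R2 => z.1) this
  have e2 := congrArg (fun z : R2 => z.2.fst) this
  have e3 := congrArg (fun z : R2 => z.2.snd) this
  simp [u2, zpow_ofNat, pow_two] at e1 e2 e3
  have : p = 0 ∧ q = 0 ∧ r = 0 := by
    clear this hv
    revert p q r
    decide
  simp [this]

end VB3

/-- `VB_3'/VB_3'' ≅ ℤ/3 ⊕ ℤ/3 ⊕ ℤ/3 ⊕ ℤ^{(∞)}`, where the last factor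
is a free abelian group of countably infinite rank (direct sum of copies of `ℤ`
indexed by `ℤ`). -/
theorem VB3_commutator_abelianization :
    Nonempty (Abelianization ↥(commutator (VB 3)) ≃*
      Multiplicative (ZMod 3 × ZMod 3 × ZMod 3 × (ℤ →₀ ℤ))) := by
  exact ⟨(AddEquiv.toMultiplicativeLeft
    (AddEquiv.ofBijective VB3.Θ ⟨VB3.Θ_inj, VB3.Θ_surj⟩)).symm⟩
end

section
/- The quotient VB_4'/VB_4'' (the abelianization of the commutator subgroup VB_4' of VB_4) is isomorphic to (ℤ/3ℤ) ⊕ (ℤ/3ℤ) ⊕ (ℤ/3ℤ). -/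
namespace VB4Proof

open scoped commutatorElement

/-- The commutative ring `F_3[t]/((t+1)^2(t-1))`, in its product form. -/
abbrev R := DualNumber (ZMod 3) × ZMod 3

/-- the unit `t` of `R` -/
def tU : Rˣ where
  val := ((TrivSqZeroExt.inl (-1) + TrivSqZeroExt.inr 1), 1)
  inv := ((TrivSqZeroExt.inl (-1) + TrivSqZeroExt.inr (-1)), 1)
  val_inv := by
    refine Prod.ext (TrivSqZeroExt.ext ?_ ?_) ?_ <;> simp
  inv_val := by
    refine Prod.ext (TrivSqZeroExt.ext ?_ ?_) ?_ <;> simp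

lemma R_three : (3 : R) = 0 := by
  refine Prod.ext (TrivSqZeroExt.ext ?_ ?_) ?_ <;> decide

lemma tU_rel : (tU : R) ^ 3 - 2 * (tU : R) ^ 2 + 2 * tU - 1 = 0 := by
  refine Prod.ext (TrivSqZeroExt.ext ?_ ?_) ?_ <;> decide

/-- `R` units act on the additive group of `R`. -/
def act : Rˣ →* MulAut (Multiplicative R) where
  toFun u := AddEquiv.toMultiplicative (DistribMulAction.toAddEquiv R u)
  map_one' := by ext x : 1; exact congrArg Multiplicative.ofAdd (one_smul Rˣ (Multiplicative.toAdd x))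
  map_mul' a b := by
    ext x : 1; exact congrArg Multiplicative.ofAdd (mul_smul a b (Multiplicative.toAdd x))

/-- The affine group of `R`. -/
abbrev E := Multiplicative R ⋊[act] Rˣ

/-- affine map with translation part `v` and linear part `u` -/
def aff (v : R) (u : Rˣ) : E := ⟨Multiplicative.ofAdd v, u⟩

lemma aff_mul (v w : R) (a b : Rˣ) : aff v a * aff w b = aff (v + a * w) (a * b) := rfl

lemma aff_one : (1 : E) = aff 0 1 := rfl

lemma aff_inv (v : R) (a : Rˣ) : (aff v a)⁻¹ = aff (-(↑a⁻¹ * v)) a⁻¹ := by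
  rw [inv_eq_iff_mul_eq_one, aff_mul, aff_one]
  simp

lemma aff_ext {v w : R} {a b : Rˣ} (h : v = w) (h' : a = b) : aff v a = aff w b := by
  rw [h, h']

/-- images of the generators -/
def gen : VBGen 4 → E
  | Sum.inl i => if i = 1 then aff (tU - 1) tU else aff 0 tU
  | Sum.inr i => if i = 1 then aff 1 (-1) else aff 0 (-1)

lemma lift_s1 : FreeGroup.lift gen (fσ 4 1) = aff 0 tU := by simp [fσ, gen]
lemma lift_s2 : FreeGroup.lift gen (fσ 4 2) = aff (tU - 1) tU := by simp [fσ, gen]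
lemma lift_s3 : FreeGroup.lift gen (fσ 4 3) = aff 0 tU := by
  simp [fσ, gen]
lemma lift_r1 : FreeGroup.lift gen (fρ 4 1) = aff 0 (-1) := by simp [fρ, gen]
lemma lift_r2 : FreeGroup.lift gen (fρ 4 2) = aff 1 (-1) := by simp [fρ, gen]
lemma lift_r3 : FreeGroup.lift gen (fρ 4 3) = aff 0 (-1) := by
  simp [fρ, gen]

lemma gen_rels : ∀ r ∈ vbRels 4, FreeGroup.lift gen r = 1 := by
  have h3 := R_three
  have ht := tU_rel
  rintro r ((⟨i, j, h1, h2, h4, h⟩ | ⟨i, h1, h2, h⟩) | ⟨i, h1, h2, h⟩)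
  · obtain rfl : i = 1 := by omega
    obtain rfl : j = 3 := by omega
    rcases h with rfl | rfl | rfl | rfl <;>
    · simp only [map_mul, map_inv, lift_s1, lift_s3, lift_r1, lift_r3, mul_inv_eq_iff_eq_mul,
        one_mul, aff_mul]
      first
        | done
        | rfl
        | exact aff_ext (by simp) (mul_comm _ _)
  · obtain rfl | rfl : i = 1 ∨ i = 2 := by omega
    all_goals
      rcases h with rfl | rfl | rfl <;>
      · simp only [map_mul, map_inv, lift_s1, lift_s2, lift_s3, lift_r1, lift_r2, lift_r3,
          mul_inv_eq_iff_eq_mul, one_mul, aff_mul, Nat.reduceAdd]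
        refine aff_ext ?_ (by simp)
        try push_cast
        first
          | done
          | grind
          | linear_combination ht
  · obtain rfl | rfl | rfl : i = 1 ∨ i = 2 ∨ i = 3 := by omega
    all_goals
      subst h
      simp only [map_mul, lift_r1, lift_r2, lift_r3, aff_mul, aff_one]
      exact aff_ext (by simp) (by simp)

/-- the representation into the affine group -/
def φ : VB 4 →* E := PresentedGroup.toGroup gen_rels

lemma φ_mk (w : FreeGroup (VBGen 4)) : φ (PresentedGroup.mk _ w) = FreeGroup.lift gen w := rfl

lemma φ_right (g : commutator (VB 4)) : (φ g).right = 1 := by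
  have h : commutator (VB 4) ≤ (SemidirectProduct.rightHom.comp φ).ker := by
    rw [commutator_def, Subgroup.commutator_le]
    intro a _ b _
    rw [MonoidHom.mem_ker, map_commutatorElement, commutatorElement_eq_one_iff_mul_comm]
    exact mul_comm (G := Rˣ) _ _
  exact h g.2

/-- translation part, on the commutator subgroup -/
def ψ : commutator (VB 4) →* Multiplicative R where
  toFun g := (φ g).left
  map_one' := by simp
  map_mul' a b := by
    change (φ (a * b)).left = _
    rw [map_mul, SemidirectProduct.mul_left, φ_right a, map_one]
    rfl

section rels
/-! Defining relations in `VB 4`. -/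

lemma rel_eq {w : FreeGroup (VBGen 4)} (h : w ∈ vbRels 4) :
    PresentedGroup.mk (vbRels 4) w = 1 :=
  PresentedGroup.one_of_mem h

lemma rr13 : vρ 4 1 * vρ 4 3 = vρ 4 3 * vρ 4 1 := by
  have := rel_eq (w := fρ 4 1 * fρ 4 3 * (fρ 4 1)⁻¹ * (fρ 4 3)⁻¹)
    (Or.inl (Or.inl ⟨1, 3, by norm_num, by norm_num, by norm_num, by tauto⟩))
  simpa [vρ, mul_inv_eq_iff_eq_mul] using this

lemma sr13 : vσ 4 1 * vρ 4 3 = vρ 4 3 * vσ 4 1 := by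
  have := rel_eq (w := fσ 4 1 * fρ 4 3 * (fσ 4 1)⁻¹ * (fρ 4 3)⁻¹)
    (Or.inl (Or.inl ⟨1, 3, by norm_num, by norm_num, by norm_num, by tauto⟩))
  simpa [vρ, vσ, mul_inv_eq_iff_eq_mul] using this

lemma sss (i : ℕ) (h : 1 ≤ i) (h' : i ≤ 2) :
    vσ 4 i * vσ 4 (i+1) * vσ 4 i = vσ 4 (i+1) * vσ 4 i * vσ 4 (i+1) := by
  have := rel_eq (w := fσ 4 i * fσ 4 (i+1) * fσ 4 i * (fσ 4 (i+1))⁻¹ * (fσ 4 i)⁻¹ * (fσ 4 (i+1))⁻¹)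
    (Or.inl (Or.inr ⟨i, h, by omega, by tauto⟩))
  simpa [vρ, vσ, mul_inv_eq_iff_eq_mul] using this

lemma rrr (i : ℕ) (h : 1 ≤ i) (h' : i ≤ 2) :
    vρ 4 i * vρ 4 (i+1) * vρ 4 i = vρ 4 (i+1) * vρ 4 i * vρ 4 (i+1) := by
  have := rel_eq (w := fρ 4 i * fρ 4 (i+1) * fρ 4 i * (fρ 4 (i+1))⁻¹ * (fρ 4 i)⁻¹ * (fρ 4 (i+1))⁻¹)
    (Or.inl (Or.inr ⟨i, h, by omega, by tauto⟩))
  simpa [vρ, vσ, mul_inv_eq_iff_eq_mul] using this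

lemma rrs (i : ℕ) (h : 1 ≤ i) (h' : i ≤ 2) :
    vρ 4 i * vρ 4 (i+1) * vσ 4 i = vσ 4 (i+1) * vρ 4 i * vρ 4 (i+1) := by
  have := rel_eq (w := fρ 4 i * fρ 4 (i+1) * fσ 4 i * (fρ 4 (i+1))⁻¹ * (fρ 4 i)⁻¹ * (fσ 4 (i+1))⁻¹)
    (Or.inl (Or.inr ⟨i, h, by omega, by tauto⟩))
  simpa [vρ, vσ, mul_inv_eq_iff_eq_mul] using this

lemma rr (i : ℕ) (h : 1 ≤ i) (h' : i ≤ 3) : vρ 4 i * vρ 4 i = 1 := by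
  have := rel_eq (w := fρ 4 i * fρ 4 i) (Or.inr ⟨i, h, by omega, rfl⟩)
  simpa [vρ] using this

lemma gen_top : Subgroup.closure ({vσ 4 1, vσ 4 2, vσ 4 3, vρ 4 1, vρ 4 2, vρ 4 3} : Set (VB 4)) = ⊤ := by
  rw [eq_top_iff, ← PresentedGroup.closure_range_of (vbRels 4)]
  refine Subgroup.closure_mono ?_
  rintro _ ⟨i, rfl⟩
  rcases i with i | i
  · fin_cases i
    · left; simp [vσ, fσ]; rfl
    · right; left; simp [vσ, fσ]; rfl
    · right; right; left; simp [vσ, fσ]; rfl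
  · fin_cases i
    · right; right; right; left; simp [vρ, fρ]; rfl
    · right; right; right; right; left; simp [vρ, fρ]; rfl
    · right; right; right; right; right; simp [vρ, fρ]; rfl
end rels

section abstract_part
variable {M : Type*} [Group M]

/-- Products `a^i b^j c^k` of three commuting elements. -/
def tri (a b c : M) (hab : Commute a b) (hac : Commute a c) (hbc : Commute b c) : Subgroup M where
  carrier := {g | ∃ i j k : ℤ, g = a ^ i * b ^ j * c ^ k}
  one_mem' := ⟨0, 0, 0, by simp⟩
  mul_mem' := by
    rintro _ _ ⟨i, j, k, rfl⟩ ⟨i', j', k', rfl⟩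
    refine ⟨i + i', j + j', k + k', ?_⟩
    have h1 := (hab.zpow_zpow i' j).eq
    have h2 := (hac.zpow_zpow i' k).eq
    have h3 := (hbc.zpow_zpow j' k).eq
    simp only [zpow_add]
    calc a ^ i * b ^ j * c ^ k * (a ^ i' * b ^ j' * c ^ k')
        = a ^ i * b ^ j * (c ^ k * a ^ i') * b ^ j' * c ^ k' := by group
      _ = a ^ i * (b ^ j * a ^ i') * (c ^ k * b ^ j') * c ^ k' := by rw [← h2]; group
      _ = _ := by rw [← h1, ← h3]; group
  inv_mem' := by
    rintro _ ⟨i, j, k, rfl⟩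
    refine ⟨-i, -j, -k, ?_⟩
    have h1 := (hab.zpow_zpow (-i) (-j)).eq
    have h2 := (hac.zpow_zpow (-i) (-k)).eq
    have h3 := (hbc.zpow_zpow (-j) (-k)).eq
    simp only [mul_inv_rev, ← zpow_neg]
    rw [← h1, ← mul_assoc, ← h2, mul_assoc, ← h3, mul_assoc]

/-- The structure of a metabelian quotient. -/
theorem metab (s1 s2 s3 r1 r2 r3 : M)
    (hM : ∀ a ∈ commutator M, ∀ b ∈ commutator M, Commute a b)
    (htop : Subgroup.closure ({s1, s2, s3, r1, r2, r3} : Set M) = ⊤)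
    (h13 : r1 * r3 = r3 * r1) (hs : s1 * r3 = r3 * s1)
    (hsss : s1 * s2 * s1 = s2 * s1 * s2)
    (hr12 : r1 * r2 * r1 = r2 * r1 * r2) (hr23 : r2 * r3 * r2 = r3 * r2 * r3)
    (hm1 : r1 * r2 * s1 = s2 * r1 * r2) (hm2 : r2 * r3 * s2 = s3 * r2 * r3)
    (h1 : r1 * r1 = 1) (h2 : r2 * r2 = 1) (h3 : r3 * r3 = 1)
    (g : M) (hg : g ∈ commutator M) :
    (r2 * r3) ^ 3 = 1 ∧ ∃ i j k : ℤ, g = (r2 * r3) ^ i * (s1 * (r2 * r3) * s1⁻¹) ^ j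
      * (s1 * (s1 * (r2 * r3) * s1⁻¹) * s1⁻¹) ^ k := by
  have i1 : r1⁻¹ = r1 := inv_eq_of_mul_eq_one_left h1
  have i2 : r2⁻¹ = r2 := inv_eq_of_mul_eq_one_left h2
  have i3 : r3⁻¹ = r3 := inv_eq_of_mul_eq_one_left h3
  have hnorm : ∀ a b : M, b ∈ commutator M → a * b * a⁻¹ ∈ commutator M := fun a b hb =>
    (inferInstance : (commutator M).Normal).conj_mem b hb a
  -- ab a^-1 b^-1 = ba etc.
  have hy : r2 * r3 ∈ commutator M := by
    have e : r2 * r3 = r3 * r2 * r3⁻¹ * r2⁻¹ := by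
      rw [i2, i3, ← hr23, mul_assoc (r2 * r3), h2, mul_one]
    rw [e]
    exact Subgroup.commutator_mem_commutator (Subgroup.mem_top _) (Subgroup.mem_top _)
  have hz : r2 * r1 ∈ commutator M := by
    have e : r2 * r1 = r1 * r2 * r1⁻¹ * r2⁻¹ := by
      rw [i2, i1, hr12, mul_assoc (r2 * r1), h2, mul_one]
    rw [e]
    exact Subgroup.commutator_mem_commutator (Subgroup.mem_top _) (Subgroup.mem_top _)
  have hy3 : (r2 * r3) ^ 3 = 1 := by
    calc (r2 * r3) ^ 3 = (r2 * r3 * r2) * (r3 * r2 * r3) := by simp only [pow_succ, pow_zero, one_mul, mul_assoc]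
      _ = r3 * r2 * (r3 * r3) * r2 * r3 := by rw [hr23]; group
      _ = 1 := by rw [h3, mul_one, mul_assoc r3, h2, mul_one, h3]
  have hz3 : (r2 * r1) ^ 3 = 1 := by
    calc (r2 * r1) ^ 3 = (r2 * r1 * r2) * (r1 * r2 * r1) := by simp only [pow_succ, pow_zero, one_mul, mul_assoc]
      _ = r1 * r2 * (r1 * r1) * r2 * r1 := by rw [← hr12]; group
      _ = 1 := by rw [h1, mul_one, mul_assoc r1, h2, mul_one, h1]
  have hx2 : (r3 * r1) ^ 2 = 1 := by
    calc (r3 * r1) ^ 2 = (r3 * r1) * (r3 * r1) := pow_two _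
      _ = (r3 * r1) * (r1 * r3) := by rw [h13]
      _ = 1 := by rw [mul_assoc, ← mul_assoc r1, h1, one_mul, h3]
  have hxe : r3 * r1 = (r2 * r3)⁻¹ * (r2 * r1) := by rw [mul_inv_rev, i3]; group
  have hx3 : (r3 * r1) ^ 3 = 1 := by
    have hc : Commute (r2 * r3)⁻¹ (r2 * r1) := (hM _ hy _ hz).inv_left
    rw [hxe, hc.mul_pow, inv_pow, hy3, hz3]; simp
  have hx : r3 * r1 = 1 := by
    have : (r3 * r1) ^ 3 = (r3 * r1) ^ 2 * (r3 * r1) := pow_succ _ _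
    rw [hx3, hx2, one_mul] at this; exact this.symm
  have e31 : r1 = r3 := by
    rw [← i3]; exact eq_inv_of_mul_eq_one_right hx
  subst e31
  obtain ⟨y, hyd⟩ : ∃ y, y = r2 * r1 := ⟨_, rfl⟩
  have hyi : y⁻¹ = r1 * r2 := by rw [hyd, mul_inv_rev, i1, i2]
  have hs2 : s2 = y⁻¹ * s1 * y := by
    rw [hyi, hm1, hyd]
    calc s2 = s2 * (r1 * r1) := by rw [h1, mul_one]
      _ = s2 * (r1 * (r2 * r2) * r1) := by rw [h2, mul_one]
      _ = _ := by simp only [mul_assoc]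
  have hs3 : s3 = s1 := by
    rw [← hyd, mul_assoc s3, ← hyd, hs2] at hm2
    have : y * s3⁻¹ * s3 = y := by group
    have e : s1 * y = s3 * y := by rw [← hm2]; group
    exact (mul_right_cancel e).symm
  subst hs3
  rw [← hyd] at hy hy3 ⊢
  clear hz hz3 hx2 hxe hx3 hx hm1 hm2
  have hr2 : r2 = y * r1 := by rw [hyd, mul_assoc, h1, mul_one]
  have hry : r1 * y * r1⁻¹ = y⁻¹ := by rw [hyi, hyd, mul_assoc, mul_assoc, mul_inv_cancel, mul_one]
  obtain ⟨y1, hy1⟩ : ∃ y1, y1 = s3 * y * s3⁻¹ := ⟨_, rfl⟩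
  obtain ⟨y2, hy2⟩ : ∃ y2, y2 = s3 * y1 * s3⁻¹ := ⟨_, rfl⟩
  obtain ⟨y3, hy3'⟩ : ∃ y3, y3 = s3 * y2 * s3⁻¹ := ⟨_, rfl⟩
  have m1 : y1 ∈ commutator M := hy1 ▸ hnorm _ _ hy
  have m2 : y2 ∈ commutator M := hy2 ▸ hnorm _ _ m1
  have c01 : Commute y y1 := hM _ hy _ m1
  have c02 : Commute y y2 := hM _ hy _ m2
  have c12 : Commute y1 y2 := hM _ m1 _ m2
  have key : y3 = y2 * y1⁻¹ * y * y1⁻¹ * y2 := by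
    rw [hs2] at hsss
    have e1 : s3 * (y⁻¹ * s3 * y) * s3 = y1⁻¹ * y2 * s3 ^ 3 := by
      rw [hy2, hy1]; group
    have e2 : y⁻¹ * s3 * y * s3 * (y⁻¹ * s3 * y) = y⁻¹ * y1 * y2⁻¹ * y3 * s3 ^ 3 := by
      rw [hy3', hy2, hy1]; group
    rw [e1, e2] at hsss
    have e3 := mul_right_cancel hsss
    have e4 : y3 = (y⁻¹ * y1 * y2⁻¹)⁻¹ * (y1⁻¹ * y2) := by rw [e3]; group
    rw [e4]; group
  rw [← hy1, ← hy2]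
  refine ⟨hy3, ?_⟩
  have ka : y ∈ tri y y1 y2 c01 c02 c12 := ⟨1, 0, 0, by simp⟩
  have kb : y1 ∈ tri y y1 y2 c01 c02 c12 := ⟨0, 1, 0, by simp⟩
  have kc : y2 ∈ tri y y1 y2 c01 c02 c12 := ⟨0, 0, 1, by simp⟩
  suffices hle : commutator M ≤ tri y y1 y2 c01 c02 c12 from hle hg
  generalize hK : tri y y1 y2 c01 c02 c12 = K at ka kb kc
  -- conjugation criterion
  have conj : ∀ w : M, w * y * w⁻¹ ∈ K → w * y1 * w⁻¹ ∈ K → w * y2 * w⁻¹ ∈ K →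
      ∀ k ∈ K, w * k * w⁻¹ ∈ K := by
    intro w ha hb hc k hk
    rw [← hK] at hk
    obtain ⟨i, j, l, rfl⟩ := hk
    have : w * (y ^ i * y1 ^ j * y2 ^ l) * w⁻¹ =
        (w * y * w⁻¹) ^ i * (w * y1 * w⁻¹) ^ j * (w * y2 * w⁻¹) ^ l := by
      simp only [conj_zpow]; group
    rw [this]
    exact K.mul_mem (K.mul_mem (K.zpow_mem ha _) (K.zpow_mem hb _)) (K.zpow_mem hc _)
  have k3 : y3 ∈ K := by
    rw [key]
    exact K.mul_mem (K.mul_mem (K.mul_mem (K.mul_mem kc (K.inv_mem kb)) ka) (K.inv_mem kb)) kc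
  have cs : ∀ k ∈ K, s3 * k * s3⁻¹ ∈ K :=
    conj s3 (hy1 ▸ kb) (hy2 ▸ kc) (hy3' ▸ k3)
  have cs' : ∀ k ∈ K, s3⁻¹ * k * s3⁻¹⁻¹ ∈ K := by
    have b1 : s3⁻¹ * y1 * s3⁻¹⁻¹ = y := by rw [hy1]; group
    have b2 : s3⁻¹ * y2 * s3⁻¹⁻¹ = y1 := by rw [hy2]; group
    have b3 : s3⁻¹ * y3 * s3⁻¹⁻¹ = y2 := by rw [hy3']; group
    refine conj s3⁻¹ ?_ (b1 ▸ ka) (b2 ▸ kb)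
    have e : s3⁻¹ * y * s3⁻¹⁻¹ = (s3⁻¹ * y1 * s3⁻¹⁻¹) * (s3⁻¹ * y2 * s3⁻¹⁻¹)⁻¹ * (s3⁻¹ * y3 * s3⁻¹⁻¹) *
        (s3⁻¹ * y2 * s3⁻¹⁻¹)⁻¹ * (s3⁻¹ * y1 * s3⁻¹⁻¹) := by
      rw [key]; group
    rw [e, b1, b2, b3]
    exact K.mul_mem (K.mul_mem (K.mul_mem (K.mul_mem ka (K.inv_mem kb)) kc) (K.inv_mem kb)) ka
  have cr : ∀ k ∈ K, r1 * k * r1⁻¹ ∈ K := by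
    have q1 : r1 * y1 * r1⁻¹ = y1⁻¹ := by
      have hs' : r1 * s3 * r1⁻¹ = s3 := by rw [← hs]; group
      calc r1 * y1 * r1⁻¹ = (r1 * s3 * r1⁻¹) * (r1 * y * r1⁻¹) * (r1 * s3 * r1⁻¹)⁻¹ := by
            rw [hy1]; group
        _ = _ := by rw [hs', hry, hy1]; group
    have q2 : r1 * y2 * r1⁻¹ = y2⁻¹ := by
      have hs' : r1 * s3 * r1⁻¹ = s3 := by rw [← hs]; group
      calc r1 * y2 * r1⁻¹ = (r1 * s3 * r1⁻¹) * (r1 * y1 * r1⁻¹) * (r1 * s3 * r1⁻¹)⁻¹ := by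
            rw [hy2]; group
        _ = _ := by rw [hs', q1, hy2]; group
    exact conj r1 (hry ▸ K.inv_mem ka) (q1 ▸ K.inv_mem kb) (q2 ▸ K.inv_mem kc)
  have cy : ∀ k ∈ K, y * k * y⁻¹ ∈ K := fun k hk => K.mul_mem (K.mul_mem ka hk) (K.inv_mem ka)
  have hN : ∀ w : M, w ∈ Subgroup.normalizer (K : Set M) := by
    have hns : s3 ∈ Subgroup.normalizer (K : Set M) := by
      rw [Subgroup.mem_normalizer_iff]
      refine fun h => ⟨cs h, fun hh => ?_⟩
      have := cs' _ hh
      have e : s3⁻¹ * (s3 * h * s3⁻¹) * s3⁻¹⁻¹ = h := by group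
      rwa [e] at this
    have hnr : r1 ∈ Subgroup.normalizer (K : Set M) := by
      rw [Subgroup.mem_normalizer_iff]
      refine fun h => ⟨cr h, fun hh => ?_⟩
      have := cr _ hh
      have e : r1 * (r1 * h * r1⁻¹) * r1⁻¹ = h := by
        calc r1 * (r1 * h * r1⁻¹) * r1⁻¹ = (r1 * r1) * h * (r1 * r1)⁻¹ := by group
          _ = h := by rw [h1]; simp
      rwa [e] at this
    have hny : y ∈ Subgroup.normalizer (K : Set M) := Subgroup.le_normalizer ka
    intro w
    have hw : w ∈ Subgroup.closure ({s3, s2, s3, r1, r2, r1} : Set M) := htop ▸ Subgroup.mem_top w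
    refine (Subgroup.closure_le _).2 ?_ hw
    rintro x (rfl | rfl | rfl | rfl | rfl | rfl)
    · exact hns
    · rw [hs2]; exact mul_mem (mul_mem (inv_mem hny) hns) hny
    · exact hns
    · exact hnr
    · rw [hr2]; exact mul_mem hny hnr
    · exact hnr
  have : K.Normal := ⟨fun n hn w => (Subgroup.mem_normalizer_iff.1 (hN w) n).1 hn⟩
  -- the quotient is commutative
  let π := QuotientGroup.mk' K
  have πy : π y = 1 := (QuotientGroup.eq_one_iff y).2 ka
  have hsr : π s3 * π r1 = π r1 * π s3 := by rw [← map_mul, hs, map_mul]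
  have πs2 : π s2 = π s3 := by rw [hs2, map_mul, map_mul, map_inv, πy]; simp
  have πr2 : π r2 = π r1 := by rw [hr2, map_mul, πy, one_mul]
  have hcl : Subgroup.closure ({π s3, π r1} : Set (M ⧸ K)) = ⊤ := by
    rw [eq_top_iff, ← Subgroup.map_top_of_surjective π (QuotientGroup.mk'_surjective K), ← htop,
      MonoidHom.map_closure]
    refine Subgroup.closure_mono ?_
    rintro _ ⟨x, (rfl | rfl | rfl | rfl | rfl | rfl), rfl⟩ <;> simp [πs2, πr2]
  have hcomm : ∀ a b : M ⧸ K, a * b = b * a := by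
    have hc : ∀ x ∈ ({π s3, π r1} : Set (M ⧸ K)), ∀ y ∈ ({π s3, π r1} : Set (M ⧸ K)),
        x * y = y * x := by
      rintro x (rfl | rfl) y (rfl | rfl)
      · rfl
      · exact hsr
      · exact hsr.symm
      · rfl
    have h1 : Subgroup.closure ({π s3, π r1} : Set (M ⧸ K)) ≤
        Subgroup.centralizer (Subgroup.closure ({π s3, π r1} : Set (M ⧸ K)) : Set (M ⧸ K)) := by
      rw [Subgroup.centralizer_closure, Subgroup.closure_le]
      intro x hx
      simp only [SetLike.mem_coe, Subgroup.mem_centralizer_iff]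
      exact fun z hz => hc z hz x hx
    rw [hcl] at h1
    intro a b
    exact Subgroup.mem_centralizer_iff.1 (h1 (Subgroup.mem_top b)) a (Subgroup.mem_top a)
  rw [commutator_def, Subgroup.commutator_le]
  intro a _ b _
  rw [← QuotientGroup.eq_one_iff]
  change π ⁅a, b⁆ = 1
  rw [map_commutatorElement, commutatorElement_eq_one_iff_mul_comm]
  exact hcomm _ _

end abstract_part

/-- the second derived subgroup -/
abbrev D : Subgroup (VB 4) := ⁅commutator (VB 4), commutator (VB 4)⁆

/-- the key element of the commutator subgroup -/
def Y : VB 4 := vρ 4 2 * vρ 4 3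

lemma D_iff (g : commutator (VB 4)) : (g : VB 4) ∈ D ↔ Abelianization.of g = 1 := by
  rw [← MonoidHom.mem_ker, Abelianization.ker_of]
  have := Subgroup.map_subtype_commutator (commutator (VB 4))
  change _ ∈ ⁅commutator (VB 4), commutator (VB 4)⁆ ↔ _
  rw [← this, Subgroup.mem_map]
  constructor
  · rintro ⟨x, hx, hxg⟩
    rwa [← Subtype.ext hxg]
  · exact fun h => ⟨g, h, rfl⟩

lemma Y_mem : Y ∈ commutator (VB 4) := by
  have i2 : (vρ 4 2)⁻¹ = vρ 4 2 := inv_eq_of_mul_eq_one_left (rr 2 (by norm_num) (by norm_num))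
  have i3 : (vρ 4 3)⁻¹ = vρ 4 3 := inv_eq_of_mul_eq_one_left (rr 3 (by norm_num) (by norm_num))
  have e : Y = vρ 4 3 * vρ 4 2 * (vρ 4 3)⁻¹ * (vρ 4 2)⁻¹ := by
    rw [Y, i2, i3, ← rrr 2 (by norm_num) (by norm_num), mul_assoc (vρ 4 2 * _),
      rr 2 (by norm_num) (by norm_num), mul_one]
  rw [e]
  exact Subgroup.commutator_mem_commutator (Subgroup.mem_top _) (Subgroup.mem_top _)

lemma conj_memC (a b : VB 4) (hb : b ∈ commutator (VB 4)) : a * b * a⁻¹ ∈ commutator (VB 4) :=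
  (inferInstance : (commutator (VB 4)).Normal).conj_mem b hb a

/-- `Y_0` -/
def Y0 : commutator (VB 4) := ⟨Y, Y_mem⟩
/-- `Y_1` -/
def Y1 : commutator (VB 4) := ⟨vσ 4 1 * Y * (vσ 4 1)⁻¹, conj_memC _ _ Y_mem⟩
/-- `Y_2` -/
def Y2 : commutator (VB 4) :=
  ⟨vσ 4 1 * (vσ 4 1 * Y * (vσ 4 1)⁻¹) * (vσ 4 1)⁻¹, conj_memC _ _ (conj_memC _ _ Y_mem)⟩

lemma metab_VB (g : commutator (VB 4)) : Y ^ 3 ∈ D ∧ ∃ i j k : ℤ,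
    Abelianization.of g = Abelianization.of (Y0 ^ i * Y1 ^ j * Y2 ^ k) := by
  let q := QuotientGroup.mk' D
  have hq : Function.Surjective q := QuotientGroup.mk'_surjective D
  have hcm : (commutator (VB 4)).map q = commutator (VB 4 ⧸ D) := by
    have h := Subgroup.map_commutator (⊤ : Subgroup (VB 4)) ⊤ q
    rw [Subgroup.map_top_of_surjective q hq] at h
    exact h
  obtain ⟨h3, i, j, k, h⟩ := metab (q (vσ 4 1)) (q (vσ 4 2)) (q (vσ 4 3)) (q (vρ 4 1)) (q (vρ 4 2))
    (q (vρ 4 3))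
    (by
      rw [← hcm]
      rintro _ ⟨a, ha, rfl⟩ _ ⟨b, hb, rfl⟩
      rw [Commute, SemiconjBy, ← commutatorElement_eq_one_iff_mul_comm, ← map_commutatorElement]
      exact (QuotientGroup.eq_one_iff _).2 (Subgroup.commutator_mem_commutator ha hb))
    (by
      rw [← Subgroup.map_top_of_surjective q hq, ← gen_top, MonoidHom.map_closure]
      simp only [Set.image_insert_eq, Set.image_singleton])
    (by simpa only [map_mul] using congrArg q rr13)
    (by simpa only [map_mul] using congrArg q sr13)
    (by simpa only [map_mul] using congrArg q (sss 1 (by norm_num) (by norm_num)))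
    (by simpa only [map_mul] using congrArg q (rrr 1 (by norm_num) (by norm_num)))
    (by simpa only [map_mul] using congrArg q (rrr 2 (by norm_num) (by norm_num)))
    (by simpa only [map_mul] using congrArg q (rrs 1 (by norm_num) (by norm_num)))
    (by simpa only [map_mul] using congrArg q (rrs 2 (by norm_num) (by norm_num)))
    (by simpa only [map_mul, map_one] using congrArg q (rr 1 (by norm_num) (by norm_num)))
    (by simpa only [map_mul, map_one] using congrArg q (rr 2 (by norm_num) (by norm_num)))
    (by simpa only [map_mul, map_one] using congrArg q (rr 3 (by norm_num) (by norm_num)))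
    (q g) (hcm ▸ Subgroup.mem_map_of_mem q g.2)
  refine ⟨?_, i, j, k, ?_⟩
  · rw [← QuotientGroup.eq_one_iff]
    exact h3
  · rw [← div_eq_one, ← map_div, ← D_iff, ← QuotientGroup.eq_one_iff]
    change q (↑g / (Y ^ i * (vσ 4 1 * Y * (vσ 4 1)⁻¹) ^ j *
      (vσ 4 1 * (vσ 4 1 * Y * (vσ 4 1)⁻¹) * (vσ 4 1)⁻¹) ^ k)) = 1
    rw [map_div, div_eq_one, h]
    simp only [map_mul, map_zpow, map_inv, Y]

lemma D_conj (w g : VB 4) (h : g ∈ D) : w * g * w⁻¹ ∈ D :=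
  (inferInstance : D.Normal).conj_mem g h w

lemma Y0_cube : Abelianization.of Y0 ^ 3 = 1 := by
  rw [← map_pow, ← D_iff]
  exact (metab_VB 1).1

lemma Y1_cube : Abelianization.of Y1 ^ 3 = 1 := by
  rw [← map_pow, ← D_iff]
  change (vσ 4 1 * Y * (vσ 4 1)⁻¹) ^ 3 ∈ D
  rw [conj_pow]
  exact D_conj _ _ (metab_VB 1).1

lemma Y2_cube : Abelianization.of Y2 ^ 3 = 1 := by
  rw [← map_pow, ← D_iff]
  change (vσ 4 1 * (vσ 4 1 * Y * (vσ 4 1)⁻¹) * (vσ 4 1)⁻¹) ^ 3 ∈ D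
  rw [conj_pow, conj_pow]
  exact D_conj _ _ (D_conj _ _ (metab_VB 1).1)

/-- The surjection from the 27 element set. -/
def F (x : ZMod 3 × ZMod 3 × ZMod 3) : Abelianization (commutator (VB 4)) :=
  Abelianization.of Y0 ^ x.1.val * Abelianization.of Y1 ^ x.2.1.val *
    Abelianization.of Y2 ^ x.2.2.val

lemma zpow_zmod {A : Type*} [Group A] (a : A) (h : a ^ 3 = 1) (i : ℤ) :
    a ^ ((i : ZMod 3).val) = a ^ i := by
  rw [← zpow_natCast, ZMod.val_intCast, zpow_eq_zpow_emod' i h]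

lemma F_surj : Function.Surjective F := by
  intro a
  obtain ⟨g, rfl⟩ := QuotientGroup.mk_surjective a
  obtain ⟨-, i, j, k, h⟩ := metab_VB g
  refine ⟨(i, j, k), ?_⟩
  change _ = Abelianization.of g
  rw [h, F, zpow_zmod _ Y0_cube, zpow_zmod _ Y1_cube, zpow_zmod _ Y2_cube]
  simp only [map_mul, map_zpow]

/-- `R` as an additive group -/
def eR : R ≃+ ZMod 3 × ZMod 3 × ZMod 3 where
  toFun x := (x.1.fst, x.1.snd, x.2)
  invFun x := (TrivSqZeroExt.inl x.1 + TrivSqZeroExt.inr x.2.1, x.2.2)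
  left_inv x := by
    refine Prod.ext (TrivSqZeroExt.ext ?_ ?_) ?_ <;> simp
  right_inv x := by simp
  map_add' x y := by simp

/-- The induced map on the abelianization -/
def Ψ : Abelianization (commutator (VB 4)) →* Multiplicative (ZMod 3 × ZMod 3 × ZMod 3) :=
  Abelianization.lift ((AddMonoidHom.toMultiplicative eR.toAddMonoidHom).comp ψ)

lemma φY : φ Y = aff 1 1 := by
  change φ (PresentedGroup.mk _ (fρ 4 2) * PresentedGroup.mk _ (fρ 4 3)) = _
  rw [map_mul, φ_mk, φ_mk, lift_r2, lift_r3, aff_mul]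
  exact aff_ext (by simp) (by simp)

lemma φs : φ (vσ 4 1) = aff 0 tU := by
  rw [vσ, φ_mk, lift_s1]

lemma φY1 : φ (vσ 4 1 * Y * (vσ 4 1)⁻¹) = aff tU 1 := by
  rw [map_mul, map_mul, map_inv, φY, φs, mul_inv_eq_iff_eq_mul, aff_mul, aff_mul]
  exact aff_ext (by simp) (by simp)

lemma φY2 : φ (vσ 4 1 * (vσ 4 1 * Y * (vσ 4 1)⁻¹) * (vσ 4 1)⁻¹) = aff (tU * tU) 1 := by
  rw [map_mul, map_mul _ (vσ 4 1), map_inv, φY1, φs, mul_inv_eq_iff_eq_mul, aff_mul, aff_mul]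
  exact aff_ext (by simp) (by simp)

lemma Ψ0 : Ψ (Abelianization.of Y0) = Multiplicative.ofAdd (1, 0, 1) := by
  change Multiplicative.ofAdd (eR (Multiplicative.toAdd (φ Y).left)) = _
  rw [φY]; rfl

lemma Ψ1 : Ψ (Abelianization.of Y1) = Multiplicative.ofAdd (-1, 1, 1) := by
  change Multiplicative.ofAdd (eR (Multiplicative.toAdd (φ (vσ 4 1 * Y * (vσ 4 1)⁻¹)).left)) = _
  rw [φY1]; rfl

lemma Ψ2 : Ψ (Abelianization.of Y2) = Multiplicative.ofAdd (1, 1, 1) := by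
  change Multiplicative.ofAdd (eR (Multiplicative.toAdd (φ (vσ 4 1 * (vσ 4 1 * Y * (vσ 4 1)⁻¹) * (vσ 4 1)⁻¹)).left)) = _
  rw [φY2]; rfl

lemma ΨF (x : ZMod 3 × ZMod 3 × ZMod 3) : Ψ (F x) = Multiplicative.ofAdd
    (x.1.val • (1, 0, 1) + x.2.1.val • (-1, 1, 1) + x.2.2.val • (1, 1, 1)) := by
  rw [F, map_mul, map_mul, map_pow, map_pow, map_pow, Ψ0, Ψ1, Ψ2]
  rfl

lemma lin_surj : Function.Bijective (fun x : ZMod 3 × ZMod 3 × ZMod 3 =>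
    ((x.1.val • (1, 0, 1) + x.2.1.val • (-1, 1, 1) + x.2.2.val • (1, 1, 1)
      : ZMod 3 × ZMod 3 × ZMod 3))) := by
  rw [← Finite.injective_iff_bijective]
  unfold Function.Injective
  decide +kernel

lemma Ψ_bij : Function.Bijective Ψ := by
  constructor
  · intro a b hab
    obtain ⟨x, rfl⟩ := F_surj a
    obtain ⟨z, rfl⟩ := F_surj b
    rw [ΨF, ΨF] at hab
    rw [lin_surj.1 (Multiplicative.ofAdd.injective hab)]
  · intro v
    obtain ⟨x, hx⟩ := lin_surj.2 (Multiplicative.toAdd v)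
    refine ⟨F x, ?_⟩
    rw [ΨF]
    exact congrArg Multiplicative.ofAdd hx

end VB4Proof

/-- `VB_4'/VB_4'' ≅ ℤ/3 ⊕ ℤ/3 ⊕ ℤ/3`. -/
theorem VB4_commutator_abelianization :
    Nonempty (Abelianization ↥(commutator (VB 4)) ≃*
      Multiplicative (ZMod 3 × ZMod 3 × ZMod 3)) :=
  ⟨MulEquiv.ofBijective VB4Proof.Ψ VB4Proof.Ψ_bij⟩
end
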